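/- arXiv:1607.05889 — 3 statements merged into one kernel-verified Lean document; each statement's English description precedes it below -/
import Mathlib

section
/- If ν is a multiplicative character of F_q and χ = ν⁴, then S(χ) = τ^{−1} · ν̄(a) · Σ_{m=0}^{3} A₄^{1−m}(a) · G(νA₄^{m−1}) · G(νA₄^{m}), where character powers A₄^{n} for negative n are interpreted via A₄^{−1} = A̅₄ (the inverse/conjugate character). -/
/-!
The inner sum of `V(j)` is a twisted Kloosterman sum `K` evaluated at `a j⁴`, so `S(ν⁴)` sums a
function of `j⁴` over the units. If `A` has order `n` and the unit group is cyclic, then a unit `t`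
has exactly `∑ m < n, Aᵐ(t)` `n`-th roots: the kernel of `A` consists of the `n`-th powers, and
off the kernel the geometric sum vanishes. Hence summing over `j` a function of `jⁿ` is the same as
summing over `t` the function of `t` weighted by `∑ m < n, Aᵐ(t)`, and `S(ν⁴)` splits into Mellin
transforms of `K` at the characters `ν Aᵐ`. Substituting `t = x y` in
`∑ B(t) A(x) ψ(x + t / x)` separates the variables, so the Mellin transform of `K` at `B` is
`G(B) G(B A)`; the dilation by `a` contributes the factor `B⁻¹(a)`.
-/

open Finset

noncomputable section

variable {F : Type} [Field F] [Fintype F] [DecidableEq F]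

/-- Katz's mixed character sum `P(j,k)`; the quadratic character `φ` is `A₄ ^ 2`. -/
def Pkatz (ψ : AddChar F ℂ) (A₄ : MulChar F ℂ) (a : F) (j k : F) : ℂ :=
  (if j = k then 1 else 0) + (A₄ ^ 2) (-1) * (if j = -k then 1 else 0) +
    (gaussSum (A₄ ^ 2) ψ)⁻¹ *
      ∑ x ∈ univ.filter (fun x : F => x ≠ 0),
        (A₄ ^ 2) (a / x - x) * ψ (x * (j + k) ^ 2 + (a / x) * (j - k) ^ 2)

/-- Katz's sums `V(j)`. -/
def Vkatz (ψ : AddChar F ℂ) (A₄ : MulChar F ℂ) (a : F) (τ : ℂ) (j : F) : ℂ :=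
  if j = 0 then gaussSum A₄ ψ / τ + τ / gaussSum A₄ ψ
  else τ⁻¹ * ∑ x ∈ univ.filter (fun x : F => x ≠ 0), A₄ x * ψ (x + a * j ^ 4 / x)

/-- The finite field hypergeometric function `₂F₁(A,B;C|x)`. -/
def hyp2F1 (A B C : MulChar F ℂ) (x : F) : ℂ :=
  ((1 : MulChar F ℂ) x / (Fintype.card F : ℂ)) *
    ∑ y : F, B y * (B⁻¹ * C) (y - 1) * A⁻¹ (1 - x * y)

/-- The Jacobi sum `J(A,B)`. -/
def Jsum (A B : MulChar F ℂ) : ℂ := ∑ y : F, A y * B (1 - y)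

/-- The sum `h(D,j)`; the quadratic character `φ` is `A₄ ^ 2`. -/
def hKatz (A₄ D : MulChar F ℂ) (j : F) : ℂ :=
  ∑ x ∈ univ.filter (fun x : F => x ≠ 0),
    D x * (A₄ ^ 2) (1 - x) * ((D⁻¹ ^ 2) * A₄ ^ 2) (x * (j + 1) ^ 2 + (j - 1) ^ 2)

/-- The sum `H(λ₁)`; the quadratic character `φ` is `A₄ ^ 2`. -/
def Hkatz (A₄ lam : MulChar F ℂ) (a : F) : ℂ :=
  ∑ p ∈ (univ ×ˢ univ).filter
      (fun p : F × F => p.1 ≠ 0 ∧ p.2 ≠ 0 ∧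
        p.2 * (p.1 + 1) ^ 2 + a * (p.1 - 1) ^ 2 / p.2 = 0),
    (lam ^ 2 * A₄ ^ 2) p.1 * (A₄ ^ 2) (p.2 - a / p.2)

/-- The Mellin transform `S(χ)` of the sums `V(j)`. -/
def Smel (ψ : AddChar F ℂ) (A₄ : MulChar F ℂ) (a : F) (τ : ℂ) (χ : MulChar F ℂ) : ℂ :=
  ∑ j ∈ univ.filter (fun j : F => j ≠ 0), χ j * Vkatz ψ A₄ a τ j

/-- The Mellin transform `T(χ)` of the sums `P(j,0)`. -/
def Tmel (ψ : AddChar F ℂ) (A₄ : MulChar F ℂ) (a : F) (χ : MulChar F ℂ) : ℂ :=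
  ∑ j ∈ univ.filter (fun j : F => j ≠ 0), χ j * Pkatz ψ A₄ a j 0

/-- The double Mellin transform `T(χ₁,χ₂)` of the sums `P(j,k)`. -/
def Tmel2 (ψ : AddChar F ℂ) (A₄ : MulChar F ℂ) (a : F) (χ₁ χ₂ : MulChar F ℂ) : ℂ :=
  ∑ j ∈ univ.filter (fun j : F => j ≠ 0), ∑ k ∈ univ.filter (fun k : F => k ≠ 0),
    χ₁ j * χ₂ k * Pkatz ψ A₄ a j k

end

lemma sum_range_comp_succ_of_eq {N : Type*} [AddCommMonoid N] {f : ℕ → N} {n : ℕ}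
    (hf : f n = f 0) : ∑ m ∈ range n, f (m + 1) = ∑ m ∈ range n, f m := by
  cases n with
  | zero => rfl
  | succ n => rw [sum_range_succ, hf, sum_range_succ']

section PowerSubstitution

lemma card_filter_pow_eq_of_dvd_card {G : Type*} [CommGroup G] [IsCyclic G] [Fintype G]
    [DecidableEq G] {n : ℕ} (hn : n ∣ Nat.card G) {t : G} (ht : ∃ s : G, s ^ n = t) :
    #{s : G | s ^ n = t} = n := calc
  #{s : G | s ^ n = t} = #{s : G | s ^ n = 1} :=
    MonoidHom.card_fiber_eq_of_mem_range (powMonoidHom n) ht ⟨1, one_pow n⟩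
  _ = Nat.card (powMonoidHom n : G →* G).ker := by
    simp only [← Fintype.card_subtype, ← Nat.card_eq_fintype_card, MonoidHom.mem_ker,
      powMonoidHom_apply]
  _ = n := by rw [IsCyclic.card_powMonoidHom_ker, Nat.gcd_eq_right hn]

variable {M : Type*} [CommMonoid M]

section CommMonoidWithZero

variable {R : Type*} [CommMonoidWithZero R]

lemma orderOf_mulChar_apply_generator {g : Mˣ} (hg : ∀ x, x ∈ Subgroup.zpowers g)
    (A : MulChar M R) : orderOf (A g) = orderOf A :=
  orderOf_eq_orderOf_iff.mpr fun n ↦ by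
    rw [MulChar.eq_iff hg, MulChar.pow_apply_coe, MulChar.one_apply_coe]

variable [IsCyclic Mˣ] (A : MulChar M R)

lemma orderOf_mulChar_dvd_card_units : orderOf A ∣ Nat.card Mˣ := by
  obtain ⟨g, hg⟩ := IsCyclic.exists_generator (α := Mˣ)
  rw [← orderOf_mulChar_apply_generator hg, orderOf_dvd_iff_pow_eq_one, ← map_pow,
    ← Units.val_pow_eq_pow_val, pow_card_eq_one', Units.val_one, map_one]

lemma mulChar_apply_coe_eq_one_iff [Finite Mˣ] (t : Mˣ) :
    A t = 1 ↔ ∃ s : Mˣ, s ^ orderOf A = t := by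
  constructor
  · intro ht
    obtain ⟨g, hg⟩ := IsCyclic.exists_generator (α := Mˣ)
    obtain ⟨k, rfl⟩ := mem_powers_iff_mem_zpowers.mpr (hg t)
    have hdvd : orderOf A ∣ k := by
      rw [← orderOf_mulChar_apply_generator hg, orderOf_dvd_iff_pow_eq_one, ← map_pow,
        ← Units.val_pow_eq_pow_val, ht]
    obtain ⟨l, rfl⟩ := hdvd
    exact ⟨g ^ l, by rw [← pow_mul, mul_comm]⟩
  · rintro ⟨s, rfl⟩
    rw [Units.val_pow_eq_pow_val, map_pow, ← MulChar.pow_apply_coe, pow_orderOf_eq_one,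
      MulChar.one_apply_coe]

end CommMonoidWithZero

variable {R : Type*} [CommRing R] [IsDomain R] [IsCyclic Mˣ] [Fintype Mˣ] (A : MulChar M R)

lemma card_filter_pow_orderOf_eq_sum_mulChar [DecidableEq Mˣ] (t : Mˣ) :
    (#{s : Mˣ | s ^ orderOf A = t} : R) = ∑ m ∈ range (orderOf A), (A ^ m) t := by
  simp only [MulChar.pow_apply_coe]
  by_cases ht : ∃ s : Mˣ, s ^ orderOf A = t
  · rw [card_filter_pow_eq_of_dvd_card (orderOf_mulChar_dvd_card_units A) ht,
      (mulChar_apply_coe_eq_one_iff A t).mpr ht]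
    simp
  · have hcard : #{s : Mˣ | s ^ orderOf A = t} = 0 :=
      card_filter_eq_zero_iff.mpr fun s _ hs ↦ ht ⟨s, hs⟩
    have hne : 1 - A t ≠ 0 :=
      sub_ne_zero.mpr fun h ↦ ht ((mulChar_apply_coe_eq_one_iff A t).mp h.symm)
    have hgeom : (1 - A t) * ∑ m ∈ range (orderOf A), A t ^ m = 0 := by
      rw [mul_neg_geom_sum, ← MulChar.pow_apply_coe, pow_orderOf_eq_one, MulChar.one_apply_coe,
        sub_self]
    rw [hcard, Nat.cast_zero, (mul_eq_zero_iff_left hne).mp hgeom]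

lemma sum_units_comp_pow_orderOf (f : Mˣ → R) :
    ∑ s : Mˣ, f (s ^ orderOf A) = ∑ m ∈ range (orderOf A), ∑ t : Mˣ, (A ^ m) t * f t := by
  classical
  simp_rw [sum_comm (s := range _), ← sum_mul, ← card_filter_pow_orderOf_eq_sum_mulChar,
    ← nsmul_eq_mul, ← sum_const, sum_fiberwise']

end PowerSubstitution

section Kloosterman

variable {R R' : Type*} [CommRing R] [CommRing R'] [Fintype Rˣ]

/-- The twisted Kloosterman sum `∑ A(x) ψ(x + t / x)` at the argument `t`, with `x` running over
the units. -/
def kloostermanSum (A : MulChar R R') (ψ : AddChar R R') (t : R) : R' :=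
  ∑ x : Rˣ, A x * ψ (x + t * ↑x⁻¹)

lemma gaussSum_eq_sum_units [Fintype R] (A : MulChar R R') (ψ : AddChar R R') :
    gaussSum A ψ = ∑ x : Rˣ, A x * ψ x := by
  refine (Fintype.sum_of_injective _ Units.val_injective _ _ (fun x hx ↦ ?_) fun _ ↦ rfl).symm
  rw [A.map_nonunit fun hu ↦ hx hu, zero_mul]

lemma sum_units_mulChar_mul_comp_mul_left (B : MulChar R R') (a : Rˣ) (f : R → R') :
    ∑ t : Rˣ, B t * f (a * t) = B⁻¹ a * ∑ t : Rˣ, B t * f t := by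
  have hB : B⁻¹ a * B a = 1 := by rw [← MulChar.mul_apply, inv_mul_cancel, MulChar.one_apply_coe]
  calc
    _ = ∑ t : Rˣ, B⁻¹ a * (B ↑(a * t) * f ↑(a * t)) := by
      refine Fintype.sum_congr _ _ fun t ↦ ?_
      rw [Units.val_mul, map_mul, ← mul_assoc, ← mul_assoc, hB, one_mul]
    _ = _ := by
      rw [← mul_sum]
      exact congrArg _ (Equiv.sum_comp (Equiv.mulLeft a) fun t ↦ B t * f t)

variable [Fintype R]

lemma sum_units_mulChar_mul_kloostermanSum (A B : MulChar R R') (ψ : AddChar R R') :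
    ∑ t : Rˣ, B t * kloostermanSum A ψ t = gaussSum B ψ * gaussSum (B * A) ψ := calc
  _ = ∑ x : Rˣ, ∑ t : Rˣ, B t * (A x * ψ (x + t * ↑x⁻¹)) := by
    simp_rw [kloostermanSum, mul_sum]
    exact sum_comm
  _ = ∑ x : Rˣ, ∑ y : Rˣ, B ↑(x * y) * (A x * ψ (x + ↑(x * y) * ↑x⁻¹)) :=
    Fintype.sum_congr _ _ fun x ↦ (Equiv.sum_comp (Equiv.mulLeft x) _).symm
  _ = ∑ x : Rˣ, ∑ y : Rˣ, (B y * ψ y) * ((B * A) x * ψ x) := by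
    refine Fintype.sum_congr _ _ fun x ↦ Fintype.sum_congr _ _ fun y ↦ ?_
    rw [← Units.val_mul, mul_inv_cancel_comm, Units.val_mul, map_mul, MulChar.mul_apply,
      AddChar.map_add_eq_mul]
    ring
  _ = gaussSum B ψ * gaussSum (B * A) ψ := by
    rw [gaussSum_eq_sum_units, gaussSum_eq_sum_units, sum_mul_sum, sum_comm]

lemma sum_units_mulChar_pow_mul_kloostermanSum [IsDomain R'] [IsCyclic Rˣ] (A ν : MulChar R R')
    (ψ : AddChar R R') (a : Rˣ) :
    ∑ j : Rˣ, (ν ^ orderOf A) j * kloostermanSum A ψ (a * j ^ orderOf A) =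
      ∑ m ∈ range (orderOf A), (ν * A ^ m)⁻¹ a *
        (gaussSum (ν * A ^ m) ψ * gaussSum (ν * A ^ (m + 1)) ψ) := calc
  _ = ∑ j : Rˣ, ν ↑(j ^ orderOf A) * kloostermanSum A ψ (a * ↑(j ^ orderOf A)) := by
    simp only [MulChar.pow_apply_coe, Units.val_pow_eq_pow_val, map_pow]
  _ = ∑ m ∈ range (orderOf A), ∑ t : Rˣ, (ν * A ^ m) t * kloostermanSum A ψ (a * t) := by
    rw [sum_units_comp_pow_orderOf A fun t ↦ ν t * kloostermanSum A ψ (a * t)]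
    simp only [MulChar.mul_apply, mul_assoc, mul_left_comm]
  _ = _ := by
    refine sum_congr rfl fun m _ ↦ ?_
    rw [sum_units_mulChar_mul_comp_mul_left, sum_units_mulChar_mul_kloostermanSum, mul_assoc,
      ← pow_succ]

lemma sum_units_mulChar_pow_mul_kloostermanSum_eq_sum_zpow [IsDomain R'] [IsCyclic Rˣ]
    (A ν : MulChar R R') (ψ : AddChar R R') (a : Rˣ) :
    ∑ j : Rˣ, (ν ^ orderOf A) j * kloostermanSum A ψ (a * j ^ orderOf A) =
      ν⁻¹ a * ∑ m ∈ range (orderOf A), (A ^ (1 - (m : ℤ))) a *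
        gaussSum (ν * A ^ ((m : ℤ) - 1)) ψ * gaussSum (ν * A ^ (m : ℤ)) ψ := by
  let f (m : ℕ) : R' := (A ^ (1 - (m : ℤ))) a * gaussSum (ν * A ^ ((m : ℤ) - 1)) ψ *
    gaussSum (ν * A ^ (m : ℤ)) ψ
  have hf : f (orderOf A) = f 0 := by
    have hA : A ^ (orderOf A : ℤ) = 1 := by rw [zpow_natCast, pow_orderOf_eq_one]
    simp only [f, zpow_sub, hA, Nat.cast_zero, zpow_zero]
  have hsummand (m : ℕ) : (ν * A ^ m)⁻¹ a *
      (gaussSum (ν * A ^ m) ψ * gaussSum (ν * A ^ (m + 1)) ψ) = ν⁻¹ a * f (m + 1) := by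
    have hexp : 1 - ((m + 1 : ℕ) : ℤ) = -m := by lia
    have hexp' : ((m + 1 : ℕ) : ℤ) - 1 = m := by lia
    simp only [f, hexp, hexp', zpow_neg, zpow_natCast, mul_inv, MulChar.mul_apply, mul_assoc]
  rw [sum_units_mulChar_pow_mul_kloostermanSum]
  simp only [hsummand, ← mul_sum]
  rw [sum_range_comp_succ_of_eq hf]

end Kloosterman

lemma sum_filter_ne_zero_eq_sum_units {G₀ N : Type*} [GroupWithZero G₀] [Fintype G₀]
    [DecidableEq G₀] [AddCommMonoid N] (f : G₀ → N) :
    ∑ x with x ≠ 0, f x = ∑ u : G₀ˣ, f u := by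
  rw [← sum_subtype_eq_sum_filter, subtype_univ]
  exact (unitsEquivNeZero.sum_comp fun x : {x : G₀ // x ≠ 0} ↦ f x).symm

lemma Smel_eq_sum_units_kloostermanSum {F : Type} [Field F] [Fintype F] [DecidableEq F]
    (ψ : AddChar F ℂ) (A₄ : MulChar F ℂ) (a : F) (τ : ℂ) (χ : MulChar F ℂ) :
    Smel ψ A₄ a τ χ = τ⁻¹ * ∑ j : Fˣ, χ j * kloostermanSum A₄ ψ (a * j ^ 4) := by
  rw [Smel, sum_filter_ne_zero_eq_sum_units, mul_sum]
  refine Fintype.sum_congr _ _ fun j ↦ ?_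
  rw [Vkatz, if_neg j.ne_zero, sum_filter_ne_zero_eq_sum_units, kloostermanSum]
  simp only [div_eq_mul_inv, Units.val_inv_eq_inv_val, mul_left_comm]

/-- Evaluation of `S(ν⁴)` in terms of Gauss sums. -/
theorem S_eval_fourth_power
    (F : Type) [Field F] [Fintype F] [DecidableEq F]
    (hq : Fintype.card F % 4 = 1)
    (ψ : AddChar F ℂ) (hψ : ψ ≠ 1)
    (A₄ : MulChar F ℂ) (hA₄ : orderOf A₄ = 4)
    (a : F) (ha : a ≠ 0)
    (τ : ℂ) (hτ : τ ^ 2 = (Fintype.card F : ℂ) * A₄ (-a))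
    (ν : MulChar F ℂ) :
    Smel ψ A₄ a τ (ν ^ 4) =
      τ⁻¹ * ν⁻¹ a * ∑ m ∈ Finset.range 4,
        (A₄ ^ (1 - (m : ℤ))) a * gaussSum (ν * A₄ ^ ((m : ℤ) - 1)) ψ *
          gaussSum (ν * A₄ ^ (m : ℤ)) ψ := by
  obtain ⟨a, rfl⟩ := ha.isUnit
  rw [Smel_eq_sum_units_kloostermanSum, mul_assoc, ← hA₄,
    sum_units_mulChar_pow_mul_kloostermanSum_eq_sum_zpow]
end

section
/- Let ν be a multiplicative character of F_q such that ν⁴ is nontrivial. Then ₂F₁(ν², νA₄; νA̅₄ | −1) = (A₄(−1)·G(νA₄)) / (q·G(φ)·G(ν²)) · ( G(ν)G(A₄) + G(νφ)G(A̅₄) ). -/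
/-!
This is a case of Kummer's theorem over a finite field: `₂F₁(ν², B; ν²B̅ | -1)` has a closed form
for every `B`. Put `χ = νB̅`, so that the defining sum is `∑ y, B(y) χ²(y - 1) ν⁻²(1 + y)`. The
involution `y = (1 - t)/(1 + t)` turns its summand into `B̅(4) χ(t²) B(1 - t²)`, a function of `t²`.
As `u` has `1 + φ(u)` square roots, the sum equals `B̅(4) (J(χ, B) + J(φχ, B))`.

Written through Gauss sums, the Jacobi sums have the common denominator `G(ν) G(νφ)`, which the
quadratic Hasse–Davenport relation `ν(4) G(ν) G(νφ) = G(φ) G(ν²)` evaluates. For `B = νA₄` this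
leaves the factor `A̅₄(4)`, and it is `A₄(-1)` because `-4 = (1 + i)⁴` with `i² = -1`.
-/

open Finset

section QuadraticCharacter

variable {F R : Type*} [Field F] [CommRing R]

lemma apply_generator_of_isQuadratic {M : Type*} [CommMonoid M] {φ : MulChar M R}
    (hφ : φ.IsQuadratic) (hφ1 : φ ≠ 1) {g : Mˣ} (hg : ∀ x, x ∈ Subgroup.zpowers g) :
    φ g = -1 := by
  have hg1 : φ g ≠ 1 := fun h => hφ1 ((MulChar.eq_iff hg φ 1).2 (by rw [h, MulChar.one_apply_coe]))
  rcases hφ g with h0 | h1 | h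
  · have hunit : IsUnit (0 : R) := h0 ▸ g.isUnit.map φ
    exact absurd (h0.trans (isUnit_zero_iff.1 hunit)) hg1
  · exact absurd h1 hg1
  · exact h

lemma ringChar_ne_two_of_isQuadratic [Finite F] {φ : MulChar F R} (hφ : φ.IsQuadratic)
    (hφ1 : φ ≠ 1) : ringChar F ≠ 2 := by
  refine fun hF => hφ1 (MulChar.ext fun a => ?_)
  obtain ⟨c, hc⟩ := FiniteField.isSquare_of_char_two hF (a : F)
  have hc0 : c ≠ 0 := fun h => a.ne_zero (by rw [hc, h, mul_zero])
  rw [MulChar.one_apply_coe, hc, map_mul, ← pow_two, ← MulChar.pow_apply' φ two_ne_zero,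
    hφ.sq_eq_one, MulChar.one_apply hc0.isUnit]

variable [Fintype F]

lemma eq_quadraticChar_of_isQuadratic [DecidableEq F] {φ : MulChar F R} (hφ : φ.IsQuadratic)
    (hφ1 : φ ≠ 1) : φ = (quadraticChar F).ringHomComp (Int.castRingHom R) := by
  obtain ⟨g, hg⟩ := IsCyclic.exists_generator (α := Fˣ)
  have hF := ringChar_ne_two_of_isQuadratic hφ hφ1
  rw [MulChar.eq_iff hg, MulChar.ringHomComp_apply, apply_generator_of_isQuadratic hφ hφ1 hg,
    apply_generator_of_isQuadratic (quadraticChar_isQuadratic F) (quadraticChar_ne_one hF) hg,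
    map_neg, map_one]

lemma card_filter_sq_eq_one_add_apply [DecidableEq F] {φ : MulChar F R} (hφ : φ.IsQuadratic)
    (hφ1 : φ ≠ 1) (u : F) : (#{t : F | t ^ 2 = u} : R) = 1 + φ u := by
  have hcard := quadraticChar_card_sqrts (ringChar_ne_two_of_isQuadratic hφ hφ1) u
  rw [Set.toFinset_ofPred] at hcard
  rw [eq_quadraticChar_of_isQuadratic hφ hφ1, MulChar.ringHomComp_apply, eq_intCast, add_comm]
  exact_mod_cast congrArg (Int.cast : ℤ → R) hcard

lemma sum_comp_sq {φ : MulChar F R} (hφ : φ.IsQuadratic) (hφ1 : φ ≠ 1) (f : F → R) :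
    ∑ t, f (t ^ 2) = ∑ u, (1 + φ u) * f u := by
  classical
  rw [← sum_fiberwise univ (· ^ 2)]
  refine sum_congr rfl fun u _ => ?_
  rw [← card_filter_sq_eq_one_add_apply hφ hφ1, ← nsmul_eq_mul, ← sum_const]
  exact sum_congr rfl fun t ht => by rw [(mem_filter.1 ht).2]

end QuadraticCharacter

section HasseDavenport

lemma mul_ne_one_of_sq_ne_one {M : Type*} [CommMonoid M] {a b : M} (ha : a ^ 2 = 1)
    (hb : b ^ 2 ≠ 1) : a * b ≠ 1 :=
  fun h => hb (by rw [← one_pow 2, ← h, mul_pow, ha, one_mul])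

variable {F R : Type*} [Field F] [Fintype F] [CommRing R] [IsDomain R]

lemma apply_four_mul_jacobiSum_self {φ ν : MulChar F R} (hφ : φ.IsQuadratic) (hφ1 : φ ≠ 1)
    (hν : ν ≠ 1) : ν 4 * jacobiSum ν ν = jacobiSum φ ν := by
  have h2 : (2 : F) ≠ 0 := Ring.two_ne_zero (ringChar_ne_two_of_isQuadratic hφ hφ1)
  have hsum : ∑ x, ν (1 - x) = 0 :=
    ((Equiv.subLeft (1 : F)).sum_comp ν).trans (MulChar.sum_eq_zero_of_ne_one hν)
  calc ν 4 * jacobiSum ν ν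
      = ∑ x, ν (1 - (2 * x - 1) ^ 2) := by
        rw [jacobiSum, mul_sum]
        refine sum_congr rfl fun x _ => ?_
        rw [← map_mul, ← map_mul, show 4 * (x * (1 - x)) = 1 - (2 * x - 1) ^ 2 by ring]
    _ = ∑ t, ν (1 - t ^ 2) :=
        ((Equiv.mulLeft₀ (2 : F) h2).trans (Equiv.subRight 1)).sum_comp fun t => ν (1 - t ^ 2)
    _ = ∑ u, (1 + φ u) * ν (1 - u) := sum_comp_sq hφ hφ1 fun u => ν (1 - u)
    _ = jacobiSum φ ν := by
        simp only [add_mul, one_mul, sum_add_distrib, hsum, zero_add, jacobiSum]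

theorem hasseDavenport_quadratic (hR : (Fintype.card F : R) ≠ 0) {ψ : AddChar F R}
    (hψ : ψ.IsPrimitive) {φ ν : MulChar F R} (hφ : φ.IsQuadratic) (hφ1 : φ ≠ 1) (hν : ν ^ 2 ≠ 1) :
    ν 4 * (gaussSum ν ψ * gaussSum (φ * ν) ψ) = gaussSum φ ψ * gaussSum (ν ^ 2) ψ := by
  have hν1 : ν ≠ 1 := fun h => hν (by rw [h, one_pow])
  have hφν : φ * ν ≠ 1 := mul_ne_one_of_sq_ne_one hφ.sq_eq_one hν
  have hJν := jacobiSum_mul_nontrivial (χ := ν) (φ := ν) (by rwa [← pow_two]) ψ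
  have hJφ := jacobiSum_mul_nontrivial hφν ψ
  have hJ := apply_four_mul_jacobiSum_self hφ hφ1 hν1
  rw [← pow_two] at hJν
  refine mul_right_cancel₀ (gaussSum_ne_zero_of_nontrivial hR hν1 hψ) ?_
  calc ν 4 * (gaussSum ν ψ * gaussSum (φ * ν) ψ) * gaussSum ν ψ
      = ν 4 * (gaussSum ν ψ * gaussSum ν ψ) * gaussSum (φ * ν) ψ := by ring
    _ = ν 4 * jacobiSum ν ν * gaussSum (ν ^ 2) ψ * gaussSum (φ * ν) ψ := by rw [← hJν]; ring
    _ = gaussSum (φ * ν) ψ * jacobiSum φ ν * gaussSum (ν ^ 2) ψ := by rw [hJ]; ring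
    _ = gaussSum φ ψ * gaussSum (ν ^ 2) ψ * gaussSum ν ψ := by rw [hJφ]; ring

end HasseDavenport

section Kummer

lemma involutive_two_div_one_add_sub_one {F : Type*} [Field F] (h2 : (2 : F) ≠ 0) :
    Function.Involutive fun y : F => 2 / (1 + y) - 1 := by
  intro y
  -- The convention `2 / 0 = 0` makes `-1`, the pole of `(1 - y) / (1 + y)`, a fixed point.
  by_cases hy : 1 + y = 0
  · simpa [hy] using (eq_neg_of_add_eq_zero_right hy).symm
  · simp only [add_sub_cancel]
    field_simp
    ring

variable {F R : Type*} [Field F] [CommRing R]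

lemma apply_four_mul_kummer_summand (χ B : MulChar F R) (y : F) :
    B 4 * (B y * (χ ^ 2) (y - 1) * ((χ * B) ^ 2)⁻¹ (1 + y)) =
      χ ((2 / (1 + y) - 1) ^ 2) * B (1 - (2 / (1 + y) - 1) ^ 2) := by
  by_cases hy : 1 + y = 0
  · simp [hy, MulChar.map_zero]
  have hsq : (2 / (1 + y) - 1) ^ 2 = (y - 1) ^ 2 * (1 + y)⁻¹ ^ 2 := by
    field_simp
    ring
  have hone_sub_sq : 1 - (2 / (1 + y) - 1) ^ 2 = 4 * y * (1 + y)⁻¹ ^ 2 := by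
    field_simp
    ring
  rw [hone_sub_sq, hsq]
  simp only [MulChar.inv_apply', MulChar.pow_apply' _ two_ne_zero, MulChar.mul_apply, map_mul,
    map_pow]
  ring

theorem apply_four_mul_kummer_sum [Fintype F] {φ : MulChar F R} (hφ : φ.IsQuadratic) (hφ1 : φ ≠ 1)
    (χ B : MulChar F R) :
    B 4 * ∑ y, B y * (χ ^ 2) (y - 1) * ((χ * B) ^ 2)⁻¹ (1 + y) =
      jacobiSum χ B + jacobiSum (φ * χ) B := by
  have h2 : (2 : F) ≠ 0 := Ring.two_ne_zero (ringChar_ne_two_of_isQuadratic hφ hφ1)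
  calc B 4 * ∑ y, B y * (χ ^ 2) (y - 1) * ((χ * B) ^ 2)⁻¹ (1 + y)
      = ∑ y, χ ((2 / (1 + y) - 1) ^ 2) * B (1 - (2 / (1 + y) - 1) ^ 2) := by
        simp only [mul_sum, apply_four_mul_kummer_summand]
    _ = ∑ t, χ (t ^ 2) * B (1 - t ^ 2) :=
        Equiv.sum_comp (involutive_two_div_one_add_sub_one h2).toPerm
          fun t => χ (t ^ 2) * B (1 - t ^ 2)
    _ = ∑ u, (1 + φ u) * (χ u * B (1 - u)) := sum_comp_sq hφ hφ1 fun u => χ u * B (1 - u)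
    _ = jacobiSum χ B + jacobiSum (φ * χ) B := by
        simp only [jacobiSum, MulChar.mul_apply, add_mul, one_mul, mul_assoc, sum_add_distrib]

end Kummer

section HypergeometricFunction

variable {F : Type} [Field F] [Fintype F]

theorem hyp2F1_kummer_jacobiSum {φ : MulChar F ℂ} (hφ : φ.IsQuadratic) (hφ1 : φ ≠ 1)
    (ν B : MulChar F ℂ) :
    hyp2F1 (ν ^ 2) B (ν ^ 2 * B⁻¹) (-1) =
      B⁻¹ 4 / Fintype.card F * (jacobiSum (ν * B⁻¹) B + jacobiSum (φ * (ν * B⁻¹)) B) := by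
  have h2 : (2 : F) ≠ 0 := Ring.two_ne_zero (ringChar_ne_two_of_isQuadratic hφ hφ1)
  have h4 : (4 : F) ≠ 0 := (show (2 : F) * 2 = 4 by norm_num) ▸ mul_ne_zero h2 h2
  have hB4 : B⁻¹ 4 * B 4 = 1 := by
    rw [← MulChar.mul_apply, inv_mul_cancel, MulChar.one_apply h4.isUnit]
  have hχ : B⁻¹ * (ν ^ 2 * B⁻¹) = (ν * B⁻¹) ^ 2 := by
    rw [mul_pow, pow_two B⁻¹]
    ac_rfl
  rw [← apply_four_mul_kummer_sum hφ hφ1, inv_mul_cancel_right, hyp2F1, hχ,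
    MulChar.one_apply isUnit_one.neg]
  simp only [neg_one_mul, sub_neg_eq_add]
  rw [div_mul_eq_mul_div (B⁻¹ 4), ← mul_assoc (B⁻¹ 4), hB4, one_mul, one_div_mul_eq_div]

theorem hyp2F1_kummer_gaussSum {ψ : AddChar F ℂ} (hψ : ψ ≠ 1) {φ : MulChar F ℂ}
    (hφ : φ.IsQuadratic) (hφ1 : φ ≠ 1) {ν : MulChar F ℂ} (hν : ν ^ 2 ≠ 1) (B : MulChar F ℂ) :
    hyp2F1 (ν ^ 2) B (ν ^ 2 * B⁻¹) (-1) =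
      (ν * B⁻¹) 4 * gaussSum B ψ /
          (Fintype.card F * gaussSum φ ψ * gaussSum (ν ^ 2) ψ) *
        (gaussSum ν ψ * gaussSum (φ * (ν * B⁻¹)) ψ +
          gaussSum (φ * ν) ψ * gaussSum (ν * B⁻¹) ψ) := by
  have hq : (Fintype.card F : ℂ) ≠ 0 := Nat.cast_ne_zero.2 Fintype.card_ne_zero
  have hprim := AddChar.IsPrimitive.of_ne_one hψ
  have hG : ∀ {χ : MulChar F ℂ}, χ ≠ 1 → gaussSum χ ψ ≠ 0 := fun h =>
    gaussSum_ne_zero_of_nontrivial hq h hprim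
  have hν1 : ν ≠ 1 := fun h => hν (by rw [h, one_pow])
  have hφν : φ * ν ≠ 1 := mul_ne_one_of_sq_ne_one hφ.sq_eq_one hν
  have hJ : jacobiSum (ν * B⁻¹) B = gaussSum (ν * B⁻¹) ψ * gaussSum B ψ / gaussSum ν ψ := by
    rw [jacobiSum_eq_gaussSum_mul_gaussSum_div_gaussSum hq (by rwa [inv_mul_cancel_right]) hprim,
      inv_mul_cancel_right]
  have hJφ : jacobiSum (φ * (ν * B⁻¹)) B =
      gaussSum (φ * (ν * B⁻¹)) ψ * gaussSum B ψ / gaussSum (φ * ν) ψ := by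
    rw [← mul_assoc, jacobiSum_eq_gaussSum_mul_gaussSum_div_gaussSum hq
      (by rwa [inv_mul_cancel_right]) hprim, inv_mul_cancel_right]
  have hHD := hasseDavenport_quadratic hq hprim hφ hφ1 hν
  have hν4 : ν 4 ≠ 0 := left_ne_zero_of_mul (hHD ▸ mul_ne_zero (hG hφ1) (hG hν))
  have hGν := hG hν1
  have hGφν := hG hφν
  rw [hyp2F1_kummer_jacobiSum hφ hφ1, hJ, hJφ, MulChar.mul_apply,
    mul_assoc (Fintype.card F : ℂ), ← hHD]
  field_simp
  ring

end HypergeometricFunction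

section QuarticCharacter

lemma isSquare_neg_one_of_four_dvd_orderOf {F R : Type*} [Field F] [Finite F] [CommRing R]
    [IsDomain R] {A : MulChar F R} (hA : 4 ∣ orderOf A) : IsSquare (-1 : F) := by
  have := Fintype.ofFinite F
  have hdvd : 4 ∣ Fintype.card F - 1 := hA.trans A.orderOf_dvd_card_sub_one
  exact FiniteField.isSquare_neg_one_iff.2 (by grind [Fintype.one_lt_card (α := F)])

variable {F R : Type*} [Field F] [CommMonoidWithZero R]

lemma apply_neg_four_of_pow_four_eq_one (h2 : (2 : F) ≠ 0) (hi : IsSquare (-1 : F))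
    {A : MulChar F R} (hA : A ^ 4 = 1) : A (-4) = 1 := by
  obtain ⟨i, hi⟩ := hi
  have hpow : (1 + i) ^ 4 = -4 := by linear_combination -(i ^ 2 + 4 * i + 5) * hi
  have hne : 1 + i ≠ 0 := fun h => h2 (by linear_combination (1 - i) * h - hi)
  rw [← hpow, map_pow, ← MulChar.pow_apply' A four_ne_zero, hA, MulChar.one_apply hne.isUnit]

lemma inv_apply_four_of_pow_four_eq_one (h2 : (2 : F) ≠ 0) (hi : IsSquare (-1 : F))
    {A : MulChar F R} (hA : A ^ 4 = 1) : A⁻¹ 4 = A (-1) := by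
  have hinv : A⁻¹ (-4) = 1 :=
    apply_neg_four_of_pow_four_eq_one h2 hi (by rw [inv_pow, hA, inv_one])
  rw [← neg_neg (4 : F), ← neg_one_mul, map_mul, hinv, mul_one, MulChar.inv_apply', inv_neg_one]

end QuarticCharacter

theorem hyp2F1_at_neg_one_general {F : Type} [Field F] [Fintype F] (ψ : AddChar F ℂ)
    (hψ : ψ ≠ 1) (A₄ : MulChar F ℂ) (hA₄ : orderOf A₄ = 4) (ν : MulChar F ℂ) (hν : ν ^ 2 ≠ 1) :
    hyp2F1 (ν ^ 2) (ν * A₄) (ν * A₄⁻¹) (-1 : F) =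
      A₄ (-1) * gaussSum (ν * A₄) ψ /
          ((Fintype.card F : ℂ) * gaussSum (A₄ ^ 2) ψ * gaussSum (ν ^ 2) ψ) *
        (gaussSum ν ψ * gaussSum A₄ ψ + gaussSum (ν * A₄ ^ 2) ψ * gaussSum A₄⁻¹ ψ) := by
  have hA4 : A₄ ^ 4 = 1 := hA₄ ▸ pow_orderOf_eq_one A₄
  have hφ : (A₄ ^ 2).IsQuadratic := MulChar.isQuadratic_iff_sq_eq_one.2 (by rw [← pow_mul, hA4])
  have hφ1 : A₄ ^ 2 ≠ 1 := pow_ne_one_of_lt_orderOf two_ne_zero (by omega)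
  have h2 : (2 : F) ≠ 0 := Ring.two_ne_zero (ringChar_ne_two_of_isQuadratic hφ hφ1)
  have hi : IsSquare (-1 : F) := isSquare_neg_one_of_four_dvd_orderOf hA₄.symm.dvd
  have hC : ν * A₄⁻¹ = ν ^ 2 * (ν * A₄)⁻¹ := by
    rw [pow_two, mul_inv, mul_assoc, mul_inv_cancel_left]
  have hχ : ν * (ν * A₄)⁻¹ = A₄⁻¹ := by rw [mul_inv, mul_inv_cancel_left]
  have hφχ : A₄ ^ 2 * A₄⁻¹ = A₄ := by rw [pow_two, mul_inv_cancel_right]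
  rw [hC, hyp2F1_kummer_gaussSum hψ hφ hφ1 hν, hχ, hφχ,
    inv_apply_four_of_pow_four_eq_one h2 hi hA4, mul_comm (A₄ ^ 2) ν]

/-- Value of `₂F₁(ν², νA₄; νA̅₄ | −1)` when `ν⁴` is nontrivial. -/
theorem hyp2F1_at_neg_one
    (F : Type) [Field F] [Fintype F] [DecidableEq F]
    (hq : Fintype.card F % 4 = 1)
    (ψ : AddChar F ℂ) (hψ : ψ ≠ 1)
    (A₄ : MulChar F ℂ) (hA₄ : orderOf A₄ = 4)
    (ν : MulChar F ℂ) (hν : ν ^ 4 ≠ 1) :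
    hyp2F1 (ν ^ 2) (ν * A₄) (ν * A₄⁻¹) (-1 : F) =
      A₄ (-1) * gaussSum (ν * A₄) ψ /
          ((Fintype.card F : ℂ) * gaussSum (A₄ ^ 2) ψ * gaussSum (ν ^ 2) ψ) *
        (gaussSum ν ψ * gaussSum A₄ ψ + gaussSum (ν * A₄ ^ 2) ψ * gaussSum A₄⁻¹ ψ) :=
  hyp2F1_at_neg_one_general ψ hψ A₄ hA₄ ν fun h => hν (by rw [pow_mul ν 2 2, h, one_pow])
end

section
/- P(0,0) = 2 + 2·Re( G(A₄)² / (q·A₄(−a)) ), where Re denotes the real part of a complex number. -/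
/-!
For `j = k = 0` the additive character disappears, and what is left is `∑ φ(a/x - x)`. For any
character `χ`, `χ²(a/x - x) = χ⁻¹(x²) χ²(a - x²)` is a function of `u = x²`, and `u` has `1 + η(u)`
square roots, where `η` is the quadratic character; so the sum splits into the two scaled Jacobi
sums `∑ χ⁻¹(u) χ²(a - u)` and `∑ (ηχ⁻¹)(u) χ²(a - u)`. Dividing by `G(χ²)` turns them into
`χ(a) G(χ⁻¹) / G(χ)` and `(ηχ)(a) G(ηχ⁻¹) / G(ηχ)`. If `χ` has order four, then `η = χ²` and
`ηχ = χ⁻¹`, so these two terms are complex conjugates of each other; by `G(χ) G(χ⁻¹) = χ(-1) q` the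
second one is `G(χ)² / (q χ(-a))`.
-/

open Finset

section SumOverSquares

variable {F R : Type*} [Field F] [CommRing R] {η : MulChar F R}

lemma eq_quadraticChar_ringHomComp [Fintype F] [DecidableEq F] (hη : η.IsQuadratic)
    (hη₁ : η ≠ 1) : η = (quadraticChar F).ringHomComp (Int.castRingHom R) := by
  obtain ⟨g, hg⟩ := IsCyclic.exists_generator (α := Fˣ)
  have hηg : η g ≠ 1 := fun h ↦ hη₁ <| (MulChar.eq_iff hg η 1).2 <| by
    rw [h, MulChar.one_apply_coe]
  have hg_nonsquare : ¬ IsSquare (g : F) := by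
    rintro ⟨r, hr⟩
    have hr_unit : IsUnit r := isUnit_of_mul_isUnit_left (hr ▸ g.isUnit)
    apply hηg
    rw [hr, map_mul, ← sq, ← MulChar.pow_apply' η two_ne_zero, hη.sq_eq_one,
      MulChar.one_apply hr_unit]
  have : Nontrivial R := ⟨η g, 1, hηg⟩
  have hηg_neg : η g = -1 :=
    ((hη g).resolve_left (MulChar.apply_ne_zero_iff.2 g.isUnit)).resolve_left hηg
  rw [MulChar.eq_iff hg, MulChar.ringHomComp_apply,
    quadraticChar_neg_one_iff_not_isSquare.2 hg_nonsquare, hηg_neg]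
  simp

lemma ringChar_ne_two_of_isQuadratic_of_ne_one [Finite F] (hη : η.IsQuadratic) (hη₁ : η ≠ 1) :
    ringChar F ≠ 2 := by
  classical
  have := Fintype.ofFinite F
  intro hF
  apply hη₁
  ext u
  rw [eq_quadraticChar_ringHomComp hη hη₁, MulChar.ringHomComp_apply,
    quadraticChar_eq_one_of_char_two hF u.ne_zero, MulChar.one_apply_coe, map_one]

variable [Fintype F]

lemma card_filter_sq_eq [DecidableEq F] (hη : η.IsQuadratic) (hη₁ : η ≠ 1) (u : F) :
    (#{x : F | x ^ 2 = u} : R) = 1 + η u := by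
  have hcard := quadraticChar_card_sqrts (ringChar_ne_two_of_isQuadratic_of_ne_one hη hη₁) u
  rw [Set.toFinset_ofPred] at hcard
  rw [eq_quadraticChar_ringHomComp hη hη₁, MulChar.ringHomComp_apply, add_comm 1]
  simpa using congrArg (Int.castRingHom R) hcard

lemma sum_comp_sq_s6 (hη : η.IsQuadratic) (hη₁ : η ≠ 1) (f : F → R) :
    ∑ x, f (x ^ 2) = ∑ u, (1 + η u) * f u := by
  classical
  rw [← sum_fiberwise' univ (· ^ 2) f]
  simp only [sum_const, nsmul_eq_mul, card_filter_sq_eq hη hη₁]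

end SumOverSquares

section SumMulCharSub

-- With `a / 0 = 0`, both sides vanish at `x = 0`.
lemma sq_apply_div_sub {F R : Type*} [Field F] [CommMonoidWithZero R] (χ : MulChar F R) (a x : F) :
    (χ ^ 2) (a / x - x) = χ⁻¹ (x ^ 2) * (χ ^ 2) (a - x ^ 2) := by
  simp only [MulChar.pow_apply' χ two_ne_zero, MulChar.inv_apply', ← map_pow, ← map_mul]
  congr 1
  rcases eq_or_ne x 0 with rfl | hx
  · simp
  · field_simp

lemma sum_sq_apply_div_sub {F R : Type*} [Field F] [Fintype F] [CommRing R] {η : MulChar F R}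
    (hη : η.IsQuadratic) (hη₁ : η ≠ 1) (χ : MulChar F R) (a : F) :
    ∑ x, (χ ^ 2) (a / x - x) =
      ∑ u, χ⁻¹ u * (χ ^ 2) (a - u) + ∑ u, (η * χ⁻¹) u * (χ ^ 2) (a - u) :=
  calc ∑ x, (χ ^ 2) (a / x - x)
    _ = ∑ x, χ⁻¹ (x ^ 2) * (χ ^ 2) (a - x ^ 2) := by simp only [sq_apply_div_sub]
    _ = ∑ u, (1 + η u) * (χ⁻¹ u * (χ ^ 2) (a - u)) :=
      sum_comp_sq_s6 hη hη₁ fun u ↦ χ⁻¹ u * (χ ^ 2) (a - u)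
    _ = _ := by simp only [add_mul, one_mul, sum_add_distrib, MulChar.mul_apply, mul_assoc]

lemma sum_mul_apply_sub {R R' : Type*} [CommRing R] [Fintype R] [CommRing R']
    (χ φ : MulChar R R') (a : Rˣ) :
    ∑ u, χ u * φ (a - u) = (χ * φ) a * jacobiSum χ φ := by
  rw [jacobiSum, mul_sum]
  refine (Fintype.sum_bijective _ a.mulLeft_bijective _ _ fun x ↦ ?_).symm
  rw [← mul_one_sub, map_mul, map_mul, MulChar.mul_apply, mul_mul_mul_comm]

end SumMulCharSub

section GaussSumRatio

lemma gaussSum_mul_gaussSum_inv {F R : Type*} [Field F] [Fintype F] [CommRing R] [IsDomain R]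
    {ψ : AddChar F R} (hψ : ψ.IsPrimitive) {χ : MulChar F R} (hχ : χ ≠ 1) :
    gaussSum χ ψ * gaussSum χ⁻¹ ψ = χ (-1) * Fintype.card F := by
  rw [← gaussSum_mul_gaussSum_pow_orderOf_sub_one hχ hψ]
  congr 2
  rw [inv_eq_iff_mul_eq_one, mul_pow_sub_one χ.orderOf_pos.ne', pow_orderOf_eq_one]

variable {F K : Type*} [Field F] [Fintype F] [Field K] {ψ : AddChar F K}

lemma inv_gaussSum_mul_sum_mul_apply_sub (hq : (Fintype.card F : K) ≠ 0) (hψ : ψ.IsPrimitive)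
    {χ φ : MulChar F K} (hφ : φ ≠ 1) (hχφ : χ * φ ≠ 1) (a : Fˣ) :
    (gaussSum φ ψ)⁻¹ * ∑ u, χ u * φ (a - u) =
      (χ * φ) a * (gaussSum χ ψ / gaussSum (χ * φ) ψ) := by
  have hG := gaussSum_ne_zero_of_nontrivial hq hφ hψ
  rw [sum_mul_apply_sub, jacobiSum_eq_gaussSum_mul_gaussSum_div_gaussSum hq hχφ hψ]
  field_simp

lemma inv_gaussSum_sq_mul_sum_sq_apply_div_sub (hq : (Fintype.card F : K) ≠ 0)
    (hψ : ψ.IsPrimitive) {η : MulChar F K} (hη : η.IsQuadratic) (hη₁ : η ≠ 1) {χ : MulChar F K}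
    (hχ : χ ^ 2 ≠ 1) (a : Fˣ) :
    (gaussSum (χ ^ 2) ψ)⁻¹ * ∑ x, (χ ^ 2) (a / x - x) =
      χ a * (gaussSum χ⁻¹ ψ / gaussSum χ ψ) +
        (η * χ) a * (gaussSum (η * χ⁻¹) ψ / gaussSum (η * χ) ψ) := by
  have hχ_mul : χ⁻¹ * χ ^ 2 = χ := by rw [sq, inv_mul_cancel_left]
  have hηχ_mul : η * χ⁻¹ * χ ^ 2 = η * χ := by rw [mul_assoc, hχ_mul]
  have hχ₁ : χ ≠ 1 := by
    rintro rfl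
    exact hχ (one_pow 2)
  have hηχ₁ : η * χ ≠ 1 := fun h ↦ hχ <| by
    rw [← one_pow 2, ← h, mul_pow, hη.sq_eq_one, one_mul]
  rw [sum_sq_apply_div_sub hη hη₁, mul_add,
    inv_gaussSum_mul_sum_mul_apply_sub hq hψ hχ (hχ_mul.symm ▸ hχ₁),
    inv_gaussSum_mul_sum_mul_apply_sub hq hψ hχ (hηχ_mul.symm ▸ hηχ₁), hχ_mul, hηχ_mul]

lemma gaussSum_sq_div_card_mul_apply_neg (hq : (Fintype.card F : K) ≠ 0) (hψ : ψ.IsPrimitive)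
    {χ : MulChar F K} (hχ : χ ≠ 1) (a : F) :
    gaussSum χ ψ ^ 2 / (Fintype.card F * χ (-a)) =
      χ⁻¹ a * (gaussSum χ ψ / gaussSum χ⁻¹ ψ) := by
  have hG := gaussSum_ne_zero_of_nontrivial hq hχ hψ
  have hdenom : Fintype.card F * χ (-a) = χ a * (gaussSum χ ψ * gaussSum χ⁻¹ ψ) := by
    rw [gaussSum_mul_gaussSum_inv hψ hχ, neg_eq_neg_one_mul, map_mul]
    ring
  rw [hdenom, MulChar.inv_apply_eq_inv']
  field_simp

lemma conj_inv_apply_mul_gaussSum_div (χ : MulChar F ℂ) (ψ : AddChar F ℂ) (a : F) :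
    (starRingEnd ℂ) (χ⁻¹ a * (gaussSum χ ψ / gaussSum χ⁻¹ ψ)) =
      χ a * (gaussSum χ⁻¹ ψ / gaussSum χ ψ) := by
  have hneg : χ (-1) ≠ 0 := MulChar.apply_ne_zero_iff.2 isUnit_one.neg
  rw [map_mul, map_div₀]
  simp only [starRingEnd_apply, MulChar.star_apply', star_gaussSum_eq, inv_inv]
  rw [← mul_gaussSum_inv_eq_gaussSum χ ψ, ← mul_gaussSum_inv_eq_gaussSum χ⁻¹ ψ,
    MulChar.inv_apply', inv_neg_one, mul_div_mul_left _ _ hneg]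

end GaussSumRatio

lemma Pkatz_zero_zero {F : Type} [Field F] [Fintype F] [DecidableEq F] (ψ : AddChar F ℂ)
    (χ : MulChar F ℂ) (a : F) :
    Pkatz ψ χ a 0 0 = 2 + (gaussSum (χ ^ 2) ψ)⁻¹ * ∑ x, (χ ^ 2) (a / x - x) := by
  have hneg : (χ ^ 2) (-1) = 1 := by
    rw [MulChar.pow_apply' χ two_ne_zero, ← map_pow, neg_one_sq, map_one]
  have hsum : ∑ x with x ≠ 0, (χ ^ 2) (a / x - x) = ∑ x, (χ ^ 2) (a / x - x) := by
    refine sum_filter_of_ne fun x _ hx hx₀ ↦ hx ?_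
    rw [hx₀, div_zero, sub_zero, MulChar.map_zero]
  simp only [Pkatz, hneg, ← hsum]
  norm_num

/-- Evaluation of `P(0,0)`. -/
theorem P_zero_zero
    (F : Type) [Field F] [Fintype F] [DecidableEq F]
    (hq : Fintype.card F % 4 = 1)
    (ψ : AddChar F ℂ) (hψ : ψ ≠ 1)
    (A₄ : MulChar F ℂ) (hA₄ : orderOf A₄ = 4)
    (a : F) (ha : a ≠ 0) :
    Pkatz ψ A₄ a 0 0 =
      2 + 2 * ((gaussSum A₄ ψ ^ 2 / ((Fintype.card F : ℂ) * A₄ (-a))).re : ℂ) := by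
  have hcard : (Fintype.card F : ℂ) ≠ 0 := Nat.cast_ne_zero.2 Fintype.card_ne_zero
  have hψ_prim : ψ.IsPrimitive := .of_ne_one hψ
  have hpow_four : A₄ ^ 4 = 1 := hA₄ ▸ pow_orderOf_eq_one A₄
  have hsq_ne_one : A₄ ^ 2 ≠ 1 := pow_ne_one_of_lt_orderOf two_ne_zero (by omega)
  have hsq_quadratic : (A₄ ^ 2).IsQuadratic := by
    rw [MulChar.isQuadratic_iff_sq_eq_one, ← pow_mul, hpow_four]
  have hA₄_ne_one : A₄ ≠ 1 := ne_one_of_map (f := powMonoidHom 2) hsq_ne_one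
  have hsq_mul : A₄ ^ 2 * A₄ = A₄⁻¹ := by rw [eq_inv_iff_mul_eq_one, ← hpow_four]; group
  have hsq_mul_inv : A₄ ^ 2 * A₄⁻¹ = A₄ := by group
  lift a to Fˣ using ha.isUnit
  have hsum := inv_gaussSum_sq_mul_sum_sq_apply_div_sub hcard hψ_prim hsq_quadratic hsq_ne_one
    hsq_ne_one a
  rw [hsq_mul, hsq_mul_inv] at hsum
  rw [Pkatz_zero_zero, hsum, gaussSum_sq_div_card_mul_apply_neg hcard hψ_prim hA₄_ne_one,
    ← conj_inv_apply_mul_gaussSum_div, add_comm ((starRingEnd ℂ) _), Complex.add_conj]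
  push_cast
  rfl
end
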